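/- arXiv:1403.5842 — 4 statements merged into one kernel-verified Lean document; each statement's English description precedes it below -/
import Mathlib

section
/- The difference divergence operator commutes with any prolonged vector field: for every p-tuple P = (P^1,…,P^p) of difference functions and every characteristic Q, and all n ∈ ℤ^p and fields u : ℤ^p → ℝ^q, Σ_{i=1}^p [(pr v P^i)(n+1_i,u) − (pr v P^i)(n,u)] = (pr v (Div P))(n,u). -/
open scoped Classical

/-- Multi-indices / lattice points of the lattice `ℤ^p`. -/
abbrev Idx (p : ℕ) : Type := Fin p → ℤ

/-- Fields `u : ℤ^p → ℝ^q`. -/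
abbrev Fld (p q : ℕ) : Type := Idx p → Fin q → ℝ

/-- Difference functions (raw): functions of a lattice point and a field. -/
abbrev DFun (p q : ℕ) : Type := Idx p → Fld p q → ℝ

/-- Replace the value `u^α(m)` of the field `u` by `t`. -/
noncomputable def upd {p q : ℕ} (u : Fld p q) (m : Idx p) (α : Fin q) (t : ℝ) : Fld p q :=
  fun m' β => if m' = m ∧ β = α then t else u m' β

/-- The partial derivative `∂F/∂u_J^α (n,u)`: the derivative of `F(n,u)` with
respect to the value `u^α(n+J)`. -/
noncomputable def pd {p q : ℕ} (F : DFun p q) (J : Idx p) (α : Fin q) : DFun p q :=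
  fun n u => deriv (fun t => F n (upd u (n + J) α t)) (u (n + J) α)

/-- The shift operator `S_K`. -/
def Sh {p q : ℕ} (K : Idx p) (F : DFun p q) : DFun p q := fun n u => F (n + K) u

/-- `F` is a difference function with stencil `S`: `F(n,u)` depends on `u` only
through the finitely many values `u(n+J)`, `J ∈ S`, smoothly in those values. -/
def IsDiffFun {p q : ℕ} (F : DFun p q) (S : Finset (Idx p)) : Prop :=
  ∃ G : Idx p → (({J // J ∈ S} → Fin q → ℝ) → ℝ),
    (∀ n, ContDiff ℝ (⊤ : ℕ∞) (G n)) ∧ ∀ n u, F n u = G n fun J α => u (n + J.1) α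

/-- The prolonged vector field of a characteristic `Q`, acting on a difference
function `F` with stencil `S`:
`(pr v F)(n,u) = Σ_α Σ_{J ∈ S} (S_J Q^α)(n,u) ⬝ ∂F/∂u_J^α(n,u)`. -/
noncomputable def prv {p q : ℕ} (Q : Fin q → DFun p q) (S : Finset (Idx p))
    (F : DFun p q) : DFun p q :=
  fun n u => ∑ α : Fin q, ∑ J ∈ S, Q α (n + J) u * pd F J α n u

/-- The difference divergence of a `p`-tuple of difference functions. -/
noncomputable def DDiv {p q : ℕ} (P : Fin p → DFun p q) : DFun p q :=
  fun n u => ∑ i : Fin p, (P i (n + Pi.single i (1 : ℤ)) u - P i n u)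

/-- The Euler–Lagrange expression `E_α(F)(n,u) = Σ_{J ∈ S} (∂F/∂u_J^α)(n−J,u)`
of a difference function `F` with stencil `S`. -/
noncomputable def EL {p q : ℕ} (S : Finset (Idx p)) (F : DFun p q) (α : Fin q) : DFun p q :=
  fun n u => ∑ J ∈ S, pd F J α (n - J) u

/-- The higher Euler operator
`E_{u_J^α}(L)(n,u) = Σ_{J0 ≥ 0} (∂L/∂u_{J0+J}^α)(n−J0,u)` for a difference
function `L` depending only on forward values, with stencil `S`
(reindexed by `K = J0 + J`; terms with `K ∉ S` vanish). -/
noncomputable def hEuler {p q : ℕ} (S : Finset (Idx p)) (L : DFun p q) (J : Idx p)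
    (α : Fin q) : DFun p q :=
  fun n u => ∑ K ∈ S.filter (fun K => J ≤ K), pd L K α (n - (K - J)) u

/-- `T^i(L)(n,u) = Σ_α Σ_{J ≥ 1_i} (S_{J−1_i} Q^α)(n,u) ⬝ E_{u_J^α}(L)(n−1_i,u)`
(a finite sum: only `J` with `1_i ≤ J ≤ K` for some stencil point `K` contribute). -/
noncomputable def TT {p q : ℕ} (Q : Fin q → DFun p q) (S : Finset (Idx p)) (i : Fin p)
    (L : DFun p q) : DFun p q :=
  fun n u => ∑ α : Fin q, ∑ J ∈ S.biUnion (fun K => Finset.Icc (Pi.single i (1 : ℤ)) K),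
    Q α (n + J - Pi.single i (1 : ℤ)) u * hEuler S L J α (n - Pi.single i (1 : ℤ)) u

/-!
On a fixed stencil `pr v` is linear on difference functions, and it commutes with shifts: passing
from `F` to `S_K F` moves the derivative with respect to `u_J` to that with respect to `u_{J+K}`,
whose coefficient is `S_{J+K} Q = S_K (S_J Q)`. Since `Div P = Σ_i (S_{1_i} P^i - P^i)` is built
from shifts and sums, it commutes with `pr v`. All terms can be computed on a common stencil because
enlarging a stencil only adds terms whose partial derivative vanishes.
-/

section

variable {p q : ℕ} {F G : DFun p q} {S T : Finset (Idx p)}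

/-- `F(n,u)` depends on `u` only through the values `u(n+J)` with `J ∈ S`. Unlike `IsDiffFun`, this
says nothing about the regularity of that dependence. -/
def HasStencil (F : DFun p q) (S : Finset (Idx p)) : Prop :=
  ∀ n, DependsOn (F n) ((n + ·) '' (S : Set (Idx p)))

/-- `F(n,u)` is differentiable in each single value `u^α(m)`, the other values of `u` being held
fixed; this is what makes the partial derivatives `pd F` additive in `F`. -/
def SeparatelyDifferentiable (F : DFun p q) : Prop :=
  ∀ n u m α, Differentiable ℝ fun t => F n (upd u m α t)

theorem IsDiffFun.hasStencil (hF : IsDiffFun F S) : HasStencil F S := by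
  obtain ⟨G, -, hFG⟩ := hF
  intro n u w huw
  rw [hFG, hFG]
  congr 1
  funext J
  exact huw _ (Set.mem_image_of_mem _ J.2)

theorem differentiable_upd_apply (u : Fld p q) (m m' : Idx p) (α β : Fin q) :
    Differentiable ℝ fun t => upd u m α t m' β := by
  unfold upd
  split_ifs <;> fun_prop

theorem IsDiffFun.separatelyDifferentiable (hF : IsDiffFun F S) : SeparatelyDifferentiable F := by
  obtain ⟨G, hG, hFG⟩ := hF
  intro n u m α
  simp only [hFG]
  exact ((hG n).differentiable (by simp)).comp <| differentiable_pi.2 fun J =>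
    differentiable_pi.2 fun β => differentiable_upd_apply u m (n + J.1) α β

theorem HasStencil.sh (hF : HasStencil F S) (K : Idx p) :
    HasStencil (Sh K F) (S.image (· + K)) := by
  intro n u w huw
  refine hF (n + K) ?_
  rintro _ ⟨J, hJ, rfl⟩
  exact huw _ ⟨J + K, Finset.mem_coe.2 (Finset.mem_image_of_mem _ hJ), by dsimp only; abel⟩

theorem SeparatelyDifferentiable.sh (hF : SeparatelyDifferentiable F) (K : Idx p) :
    SeparatelyDifferentiable (Sh K F) :=
  fun n => hF (n + K)

theorem SeparatelyDifferentiable.sub (hF : SeparatelyDifferentiable F)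
    (hG : SeparatelyDifferentiable G) : SeparatelyDifferentiable (F - G) :=
  fun n u m α => (hF n u m α).sub (hG n u m α)

theorem HasStencil.pd_eq_zero (hF : HasStencil F S) {J : Idx p} (hJ : J ∉ S) (α : Fin q) :
    pd F J α = 0 := by
  funext n u
  have hconst (t : ℝ) : F n (upd u (n + J) α t) = F n u := by
    refine hF n ?_
    rintro _ ⟨K, hK, rfl⟩
    have hne : n + K ≠ n + J := fun h => hJ (add_left_cancel h ▸ hK)
    funext β
    exact if_neg fun h => hne h.1
  simp [pd, hconst]

theorem pd_sh (F : DFun p q) (K J : Idx p) (α : Fin q) :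
    pd (Sh K F) (J + K) α = Sh K (pd F J α) := by
  funext n u
  have hassoc : n + (J + K) = n + K + J := by abel
  simp only [pd, Sh, hassoc]

theorem pd_sub (hF : SeparatelyDifferentiable F) (hG : SeparatelyDifferentiable G) (J : Idx p)
    (α : Fin q) : pd (F - G) J α = pd F J α - pd G J α := by
  funext n u
  exact deriv_fun_sub (hF n u _ α _) (hG n u _ α _)

theorem pd_sum {ι : Type*} (s : Finset ι) {F : ι → DFun p q}
    (hF : ∀ i ∈ s, SeparatelyDifferentiable (F i)) (J : Idx p) (α : Fin q) :
    pd (∑ i ∈ s, F i) J α = ∑ i ∈ s, pd (F i) J α := by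
  funext n u
  simp only [pd, Finset.sum_apply]
  exact deriv_fun_sum fun i hi => hF i hi n u _ α _

theorem prv_sub (Q : Fin q → DFun p q) (S : Finset (Idx p)) (hF : SeparatelyDifferentiable F)
    (hG : SeparatelyDifferentiable G) : prv Q S (F - G) = prv Q S F - prv Q S G := by
  funext n u
  simp only [prv, pd_sub hF hG, Pi.sub_apply, mul_sub, Finset.sum_sub_distrib]

theorem prv_sum {ι : Type*} (Q : Fin q → DFun p q) (S : Finset (Idx p)) (s : Finset ι)
    {F : ι → DFun p q} (hF : ∀ i ∈ s, SeparatelyDifferentiable (F i)) :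
    prv Q S (∑ i ∈ s, F i) = ∑ i ∈ s, prv Q S (F i) := by
  funext n u
  simp only [prv, pd_sum s hF, Finset.sum_apply, Finset.mul_sum]
  rw [Finset.sum_comm (s := s)]
  exact Finset.sum_congr rfl fun α _ => Finset.sum_comm

theorem HasStencil.prv_eq_of_subset (hF : HasStencil F S) (hST : S ⊆ T) (Q : Fin q → DFun p q) :
    prv Q S F = prv Q T F := by
  funext n u
  refine Finset.sum_congr rfl fun α _ => Finset.sum_subset hST fun J _ hJ => ?_
  simp only [hF.pd_eq_zero hJ, Pi.zero_apply, mul_zero]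

theorem sh_prv (Q : Fin q → DFun p q) (S : Finset (Idx p)) (F : DFun p q) (K : Idx p) :
    Sh K (prv Q S F) = prv Q (S.image (· + K)) (Sh K F) := by
  funext n u
  have hassoc (J : Idx p) : n + (J + K) = n + K + J := by abel
  simp only [prv, Finset.sum_image (add_left_injective K).injOn, pd_sh, Sh, hassoc]

theorem dDiv_eq_sum (P : Fin p → DFun p q) :
    DDiv P = ∑ i, (Sh (Pi.single i (1 : ℤ)) (P i) - P i) := by
  funext n u
  simp only [DDiv, Sh, Finset.sum_apply, Pi.sub_apply]

theorem stmt_2_general {P : Fin p → DFun p q} {S : Fin p → Finset (Idx p)}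
    (hS : ∀ i, HasStencil (P i) (S i)) (hP : ∀ i, SeparatelyDifferentiable (P i))
    (Q : Fin q → DFun p q)
    (hT : ∀ i, S i ∪ (S i).image (· + Pi.single i (1 : ℤ)) ⊆ T) :
    DDiv (fun i => prv Q (S i) (P i)) = prv Q T (DDiv P) := by
  have hterm (i : Fin p) :
      Sh (Pi.single i (1 : ℤ)) (prv Q (S i) (P i)) - prv Q (S i) (P i)
        = prv Q T (Sh (Pi.single i (1 : ℤ)) (P i) - P i) := by
    have hsub := Finset.union_subset_iff.1 (hT i)
    rw [sh_prv, ((hS i).sh _).prv_eq_of_subset hsub.2, (hS i).prv_eq_of_subset hsub.1,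
      prv_sub Q T ((hP i).sh _) (hP i)]
  rw [dDiv_eq_sum, dDiv_eq_sum, prv_sum Q T _ fun i _ => ((hP i).sh _).sub (hP i)]
  exact Finset.sum_congr rfl fun i _ => hterm i

end

/-- The difference divergence operator commutes with any
prolonged vector field: for every `p`-tuple `P` of difference functions and
every characteristic `Q`, and all `n`, `u`,
`Σ_i [(pr v P^i)(n+1_i,u) − (pr v P^i)(n,u)] = (pr v (Div P))(n,u)`.
(The stencil of `Div P` is the union of the stencils of the `P^i` and their
translates by `1_i`.) -/
theorem stmt_2 {p q : ℕ} (hp : 1 ≤ p) (hq : 1 ≤ q)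
    (P : Fin p → DFun p q) (S : Fin p → Finset (Idx p))
    (hP : ∀ i, IsDiffFun (P i) (S i))
    (Q : Fin q → DFun p q) (SQ : Finset (Idx p)) (hQ : ∀ α, IsDiffFun (Q α) SQ)
    (n : Idx p) (u : Fld p q) :
    ∑ i : Fin p,
        (prv Q (S i) (P i) (n + Pi.single i (1 : ℤ)) u - prv Q (S i) (P i) n u)
      = prv Q
          (Finset.univ.biUnion fun i =>
            S i ∪ (S i).image (fun J => J + Pi.single i (1 : ℤ)))
          (DDiv P) n u := by
  have hT (i : Fin p) := Finset.subset_biUnion_of_mem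
    (fun i => S i ∪ (S i).image (fun J => J + Pi.single i (1 : ℤ))) (Finset.mem_univ i)
  have hcomm : DDiv (fun i => prv Q (S i) (P i)) = prv Q _ (DDiv P) :=
    stmt_2_general (fun i => (hP i).hasStencil) (fun i => (hP i).separatelyDifferentiable) Q hT
  exact congrFun₂ hcomm n u
end

section
/- Change of variables formula for the difference Euler–Lagrange operator under point transformations: let φ : ℤ^p × ℝ^q → ℝ^q be smooth in its second argument, acting pointwise on fields by (φ∘u)(m) = φ(m, u(m)). For any difference function L (viewed as a function of the v-variables) define the difference function L̃ by L̃(n,u) = L(n, φ∘u). Then for every component index α and all n, u: E_{u^α}(L̃)(n,u) = Σ_{β=1}^q (∂φ^β/∂u^α)(n, u(n)) · E_{v^β}(L)(n, φ∘u), where E_{v^β}(L) is the Euler–Lagrange expression of L in the v-variables. -/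
open scoped Classical

/-!
Each term of the Euler–Lagrange sum at `n` differentiates in the value of the field at the single
site `n`, so it only sees the restriction of the Lagrangian to fields that agree with `φ ∘ u` away
from `n`. As `φ` acts pointwise, composing with it turns this restriction into its composite with
`φ n`. The chain rule on `ℝ^r` then applies term by term, and its factors `∂φ^β/∂u^α` do not depend
on the summation index `J`.
-/

section PartialDerivatives

variable {𝕜 E ι : Type*} [NontriviallyNormedField 𝕜] [NormedAddCommGroup E] [NormedSpace 𝕜 E]
  [DecidableEq ι]

theorem deriv_comp_update_eq_fderiv [Finite ι] {H : (ι → 𝕜) → E} {x : ι → 𝕜}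
    (hH : DifferentiableAt 𝕜 H x) (i : ι) :
    deriv (fun t => H (Function.update x i t)) (x i) = fderiv 𝕜 H x (Pi.single i 1) :=
  have := Fintype.ofFinite ι
  (hH.hasFDerivAt.comp_hasDerivAt_of_eq (x i) (hasDerivAt_update x i (x i))
    (Function.update_eq_self i x).symm).deriv

theorem deriv_comp_eq_sum_deriv_update [Fintype ι] {H : (ι → 𝕜) → E} {f : 𝕜 → ι → 𝕜} {t : 𝕜}
    (hH : DifferentiableAt 𝕜 H (f t)) (hf : DifferentiableAt 𝕜 f t) :
    deriv (fun s => H (f s)) t =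
      ∑ i, deriv (fun s => f s i) t • deriv (fun y => H (Function.update (f t) i y)) (f t i) := by
  calc deriv (fun s => H (f s)) t
      = fderiv 𝕜 H (f t) (deriv f t) := fderiv_comp_deriv t hH hf
    _ = ∑ i, deriv f t i • fderiv 𝕜 H (f t) (Pi.single i 1) := by
        conv_lhs => rw [pi_eq_sum_univ' (deriv f t)]
        simp only [map_sum, map_smul]
    _ = ∑ i, deriv (fun s => f s i) t •
          deriv (fun y => H (Function.update (f t) i y)) (f t i) := by
        simp only [deriv_pi (differentiableAt_pi.1 hf), deriv_comp_update_eq_fderiv hH]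

end PartialDerivatives

section DifferenceFunctions

variable {p q r : ℕ}

theorem upd_eq_update (u : Fld p q) (m : Idx p) (α : Fin q) (t : ℝ) :
    upd u m α t = Function.update u m (Function.update (u m) α t) := by
  funext m' β
  by_cases hm : m' = m
  · subst hm
    simp [upd, Function.update_apply]
  · simp [upd, hm]

theorem IsDiffFun.contDiff_update {F : DFun p q} {S : Finset (Idx p)} (hF : IsDiffFun F S)
    (k m : Idx p) (u : Fld p q) :
    ContDiff ℝ (⊤ : ℕ∞) fun w => F k (Function.update u m w) := by
  obtain ⟨G, hG, hFG⟩ := hF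
  simp only [hFG]
  refine (hG k).comp (contDiff_pi.2 fun J => ?_)
  by_cases hJ : k + J.1 = m
  · simp only [hJ, Function.update_self]
    exact contDiff_id
  · simp only [Function.update_of_ne hJ]
    exact contDiff_const

theorem pd_comp_pointwise {L : DFun p r} {φ : Idx p → (Fin q → ℝ) → (Fin r → ℝ)}
    {k J n : Idx p} {u : Fld p q} (hn : k + J = n)
    (hL : DifferentiableAt ℝ (fun w => L k (Function.update (fun m => φ m (u m)) n w))
      (φ n (u n)))
    (hφ : DifferentiableAt ℝ (φ n) (u n)) (α : Fin q) :
    pd (fun n' u' => L n' (fun m => φ m (u' m))) J α k u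
      = ∑ β : Fin r,
          deriv (fun t => φ n (Function.update (u n) α t) β) (u n α)
            * pd L J β k (fun m => φ m (u m)) := by
  set v : Fld p r := fun m => φ m (u m)
  have update_self : Function.update (u n) α (u n α) = u n := Function.update_eq_self α (u n)
  have pointwise_update (w : Fin q → ℝ) :
      (fun m => φ m (Function.update u n w m)) = Function.update v n (φ n w) :=
    funext (Function.apply_update φ u n w)
  have hφα : DifferentiableAt ℝ (fun t => φ n (Function.update (u n) α t)) (u n α) :=
    DifferentiableAt.comp (u n α) (update_self.symm ▸ hφ)
      (hasDerivAt_update (u n) α (u n α)).differentiableAt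
  have chain_rule := deriv_comp_eq_sum_deriv_update
    (H := fun w => L k (Function.update v n w)) (update_self.symm ▸ hL) hφα
  simpa only [pd, hn, upd_eq_update, pointwise_update, update_self, smul_eq_mul] using chain_rule

theorem stmt_4_general {L : DFun p r} {S : Finset (Idx p)}
    {φ : Idx p → (Fin q → ℝ) → (Fin r → ℝ)} {n : Idx p} {u : Fld p q}
    (hL : ∀ J ∈ S, DifferentiableAt ℝ
      (fun w => L (n - J) (Function.update (fun m => φ m (u m)) n w)) (φ n (u n)))
    (hφ : DifferentiableAt ℝ (φ n) (u n)) (α : Fin q) :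
    EL S (fun n' u' => L n' (fun m => φ m (u' m))) α n u
      = ∑ β : Fin r,
          deriv (fun t => φ n (Function.update (u n) α t) β) (u n α)
            * EL S L β n (fun m => φ m (u m)) := by
  simp only [EL, Finset.mul_sum]
  rw [Finset.sum_comm]
  exact Finset.sum_congr rfl fun J hJ => pd_comp_pointwise (sub_add_cancel n J) (hL J hJ) hφ α

end DifferenceFunctions

/-- Change of variables formula for the difference
Euler–Lagrange operator under point transformations: let `φ : ℤ^p × ℝ^q → ℝ^q`
be smooth in its second argument, acting pointwise on fields by
`(φ∘u)(m) = φ(m, u(m))`.  For a difference function `L` (in the `v`-variables)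
define `L̃(n,u) = L(n, φ∘u)`.  Then
`E_{u^α}(L̃)(n,u) = Σ_β (∂φ^β/∂u^α)(n, u(n)) ⬝ E_{v^β}(L)(n, φ∘u)`. -/
theorem stmt_4 {p q : ℕ} (hp : 1 ≤ p) (hq : 1 ≤ q)
    (L : DFun p q) (S : Finset (Idx p)) (hL : IsDiffFun L S)
    (φ : Idx p → (Fin q → ℝ) → (Fin q → ℝ)) (hφ : ∀ m, ContDiff ℝ (⊤ : ℕ∞) (φ m))
    (α : Fin q) (n : Idx p) (u : Fld p q) :
    EL S (fun n' u' => L n' (fun m => φ m (u' m))) α n u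
      = ∑ β : Fin q,
          deriv (fun t => φ n (Function.update (u n) α t) β) (u n α)
            * EL S L β n (fun m => φ m (u m)) :=
  stmt_4_general (fun J _ => (hL.contDiff_update (n - J) n _).differentiable (by simp) _)
    ((hφ n).differentiable (by simp) _) α
end

section
/- Theorem (divergence variational symmetries are symmetries of the Euler–Lagrange system): let L be a difference Lagrangian and let Q be a characteristic such that pr v(L) = Div R identically for some p-tuple R of difference functions (a divergence variational symmetry). Then for every component index α, every n ∈ ℤ^p, and every field u : ℤ^p → ℝ^q satisfying E_β(L)(m,u) = 0 for all β and all m ∈ ℤ^p, one has (pr v(E_α(L)))(n,u) = 0; that is, Q generates a symmetry group of the difference Euler–Lagrange system E_α(L) = 0. -/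
open scoped Classical

/-!
Variations commute up to a term involving the Euler–Lagrange expressions. Write `Λ = ∑ k ∈ A, L k`
for the action over a finite part `A` of the lattice and `V = ∑ β, ∑ m, Q β m * ∂/∂u^β(m)` for the
prolonged vector field. Once `A` is large, `E_α(L)(n) = ∂Λ/∂u^α(n)`, and the Leibniz rule together
with the symmetry of second derivatives gives
`V (∂Λ/∂u^α(n)) = ∂(V Λ)/∂u^α(n) - ∑ β, ∑ m, ∂Q^β(m)/∂u^α(n) * ∂Λ/∂u^β(m)`,
that is, `pr v (E_α(L)) = E_α(pr v L)` minus a combination of the `E_β(L)`. The first term is zero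
because Euler operators annihilate divergences, the second one on solutions.
-/

section DirectionalDerivative

open scoped ContDiff

variable {V : Type*} [AddCommGroup V] [Module ℝ V] {f g : V → ℝ}

/-- The directional derivative of `f` along `v`, as an operator on functions. -/
noncomputable def dirDeriv (v : V) (f : V → ℝ) : V → ℝ :=
  fun x => lineDeriv ℝ f x v

/-- `f` is smooth along every finite-dimensional affine subspace. This notion of smoothness needs no
topology on `V`, and it is stable under directional derivatives. -/
def FinitelySmooth (f : V → ℝ) : Prop :=
  ∀ (E : Type) [NormedAddCommGroup E] [NormedSpace ℝ E] [FiniteDimensional ℝ E]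
    (x : V) (φ : E →ₗ[ℝ] V), ContDiff ℝ ∞ fun y => f (x + φ y)

theorem dirDeriv_comp_affine {E : Type*} [AddCommGroup E] [Module ℝ E] (f : V → ℝ) (x : V)
    (φ : E →ₗ[ℝ] V) (e : E) :
    dirDeriv e (fun y => f (x + φ y)) = fun y => dirDeriv (φ e) f (x + φ y) := by
  funext y
  simp only [dirDeriv, lineDeriv, map_add, map_smul, add_assoc]

theorem dirDeriv_eq_fderiv {E : Type*} [NormedAddCommGroup E] [NormedSpace ℝ E] {f : E → ℝ}
    (hf : Differentiable ℝ f) (e : E) : dirDeriv e f = fun y => fderiv ℝ f y e :=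
  funext fun y => (hf y).lineDeriv_eq_fderiv

theorem dirDeriv_comm_of_contDiff {E : Type*} [NormedAddCommGroup E] [NormedSpace ℝ E] {f : E → ℝ}
    (hf : ContDiff ℝ 2 f) (v w : E) :
    dirDeriv v (dirDeriv w f) = dirDeriv w (dirDeriv v f) := by
  have hf' : Differentiable ℝ (fderiv ℝ f) :=
    (hf.fderiv_right (m := 1) (by norm_num)).differentiable (by simp)
  have dirDeriv_dirDeriv (a b : E) :
      dirDeriv a (dirDeriv b f) = fun y => fderiv ℝ (fderiv ℝ f) y a b := by
    rw [dirDeriv_eq_fderiv (hf.differentiable (by simp)),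
      dirDeriv_eq_fderiv (hf'.clm_apply (differentiable_const b))]
    funext y
    simp [fderiv_clm_apply (hf' y) (differentiableAt_const b)]
  rw [dirDeriv_dirDeriv, dirDeriv_dirDeriv]
  funext y
  exact (hf.contDiffAt.isSymmSndFDerivAt (by simp)).eq v w

namespace FinitelySmooth

theorem sum {ι : Type*} {s : Finset ι} {f : ι → V → ℝ} (h : ∀ i ∈ s, FinitelySmooth (f i)) :
    FinitelySmooth (∑ i ∈ s, f i) := by
  intro E _ _ _ x φ
  simpa only [Finset.sum_apply] using ContDiff.sum fun i hi => h i hi E x φ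

theorem mul (hf : FinitelySmooth f) (hg : FinitelySmooth g) : FinitelySmooth (f * g) :=
  fun E _ _ _ x φ => (hf E x φ).mul (hg E x φ)

theorem sub (hf : FinitelySmooth f) (hg : FinitelySmooth g) : FinitelySmooth (f - g) :=
  fun E _ _ _ x φ => (hf E x φ).sub (hg E x φ)

theorem lineDifferentiableAt (hf : FinitelySmooth f) (x v : V) : LineDifferentiableAt ℝ f x v :=
  ((hf ℝ x (LinearMap.toSpanSingleton ℝ V v)).differentiable (by simp)) 0

theorem dirDeriv (hf : FinitelySmooth f) (v : V) : FinitelySmooth (dirDeriv v f) := by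
  intro E _ _ _ x φ
  let ψ : E × ℝ →ₗ[ℝ] V := φ.coprod (LinearMap.toSpanSingleton ℝ V v)
  have hψ : ContDiff ℝ ∞ fun y => f (x + ψ y) := hf (E × ℝ) x ψ
  have dirDeriv_eq (y : E) :
      _root_.dirDeriv v f (x + φ y) = fderiv ℝ (fun z => f (x + ψ z)) (y, 0) (0, 1) := by
    have := congrFun (dirDeriv_comp_affine f x ψ (0, 1)) (y, 0)
    rw [dirDeriv_eq_fderiv (hψ.differentiable (by simp))] at this
    simpa [ψ] using this.symm
  simp only [dirDeriv_eq]
  exact ((hψ.fderiv_right (m := ∞) (by simp)).comp (contDiff_prodMk_left 0)).clm_apply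
    contDiff_const

end FinitelySmooth

theorem dirDeriv_sum {ι : Type*} {s : Finset ι} {f : ι → V → ℝ}
    (h : ∀ i ∈ s, FinitelySmooth (f i)) (v : V) :
    dirDeriv v (∑ i ∈ s, f i) = ∑ i ∈ s, dirDeriv v (f i) := by
  funext x
  simp only [dirDeriv, lineDeriv, Finset.sum_apply]
  exact deriv_fun_sum fun i hi => (h i hi).lineDifferentiableAt x v

theorem dirDeriv_sub (hf : FinitelySmooth f) (hg : FinitelySmooth g) (v : V) :
    dirDeriv v (f - g) = dirDeriv v f - dirDeriv v g :=
  funext fun x => deriv_fun_sub (hf.lineDifferentiableAt x v) (hg.lineDifferentiableAt x v)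

theorem dirDeriv_mul (hf : FinitelySmooth f) (hg : FinitelySmooth g) (v : V) :
    dirDeriv v (f * g) = dirDeriv v f * g + f * dirDeriv v g := by
  funext x
  simpa [dirDeriv, lineDeriv] using
    deriv_fun_mul (hf.lineDifferentiableAt x v) (hg.lineDifferentiableAt x v)

theorem dirDeriv_comm (hf : FinitelySmooth f) (v w : V) :
    dirDeriv v (dirDeriv w f) = dirDeriv w (dirDeriv v f) := by
  funext x
  let φ : ℝ × ℝ →ₗ[ℝ] V :=
    (LinearMap.toSpanSingleton ℝ V v).coprod (LinearMap.toSpanSingleton ℝ V w)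
  have hφ : ContDiff ℝ 2 fun y => f (x + φ y) := contDiff_infty.1 (hf (ℝ × ℝ) x φ) 2
  have comm := congrFun (dirDeriv_comm_of_contDiff hφ (1, 0) (0, 1)) 0
  simp only [dirDeriv_comp_affine f x φ, dirDeriv_comp_affine (dirDeriv _ f) x φ] at comm
  simpa [φ] using comm

theorem dependsOn_dirDeriv {ι : Type*} {W : ι → Type*} [∀ i, AddCommGroup (W i)]
    [∀ i, Module ℝ (W i)] {f : (∀ i, W i) → ℝ} {s : Set ι} (hf : DependsOn f s) (v : ∀ i, W i) :
    DependsOn (dirDeriv v f) s := by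
  intro x y hxy
  have (t : ℝ) : f (x + t • v) = f (y + t • v) := hf fun i hi => by simp [hxy i hi]
  simp only [dirDeriv, lineDeriv, this]

theorem dirDeriv_eq_zero_of_dependsOn {ι : Type*} {W : ι → Type*} [∀ i, AddCommGroup (W i)]
    [∀ i, Module ℝ (W i)] {f : (∀ i, W i) → ℝ} {s : Set ι} (hf : DependsOn f s) {v : ∀ i, W i}
    (hv : ∀ i ∈ s, v i = 0) : dirDeriv v f = 0 := by
  funext x
  have (t : ℝ) : f (x + t • v) = f x := hf fun i hi => by simp [hv i hi]
  simp [dirDeriv, lineDeriv, this]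

end DirectionalDerivative

theorem dependsOn_sum {ι κ M : Type*} {W : ι → Type*} [AddCommMonoid M] {A : Finset κ}
    {f : κ → (∀ i, W i) → M} {s : Set ι} (h : ∀ k ∈ A, DependsOn (f k) s) :
    DependsOn (fun x => ∑ k ∈ A, f k x) s :=
  fun _ _ hxy => Finset.sum_congr rfl fun k hk => h k hk hxy

theorem eventually_sum_eq_sum_comp {ι κ M : Type*} [AddCommMonoid M] (S : Finset ι) {e : ι → κ}
    (he : Function.Injective e) :
    ∀ᶠ A : Finset κ in Filter.atTop, ∀ w : κ → M, Function.support w ⊆ e '' S →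
      ∑ k ∈ A, w k = ∑ J ∈ S, w (e J) := by
  filter_upwards [Filter.eventually_ge_atTop (S.image e)] with A hA w hw
  refine (Finset.sum_of_injOn e he.injOn (fun J hJ => hA (Finset.mem_image_of_mem e hJ))
    (fun k _ hk => ?_) fun _ _ => rfl).symm
  exact Function.notMem_support.1 fun h => hk (hw h)

section DifferenceFunctions

open Filter
open scoped Pointwise

variable {p q : ℕ}

/-- The field equal to the `α`-th unit vector at `m` and to zero elsewhere: the direction of the
partial derivative with respect to `u^α(m)`. -/
def unitField (m : Idx p) (α : Fin q) : Fld p q := Pi.single m (Pi.single α 1)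

local notation "∂[" m "," α "]" => dirDeriv (unitField m α)

theorem upd_eq_add_smul_unitField (u : Fld p q) (m : Idx p) (α : Fin q) (t : ℝ) :
    upd u m α t = u + (t - u m α) • unitField m α := by
  funext m' β
  by_cases hm : m' = m
  · subst hm
    by_cases hβ : β = α
    · subst hβ
      simp [upd, unitField]
    · simp [upd, unitField, hβ]
  · simp [upd, unitField, hm]

theorem pd_eq_dirDeriv (F : DFun p q) (J : Idx p) (α : Fin q) (n : Idx p) :
    pd F J α n = ∂[n + J,α] (F n) := by
  funext u
  simp only [pd, upd_eq_add_smul_unitField]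
  rw [deriv_comp_sub_const (fun t => F n (u + t • unitField (n + J) α)), sub_self]
  rfl

/-- `S` is a stencil for `F`: `F n` depends only on the values `u (n + J)` with `J ∈ S`, smoothly
along finite-dimensional families of fields. Unlike the explicit factorization demanded by
`IsDiffFun`, this condition is immediate to check for derivatives, sums and products. -/
structure HasStencil_s7 (F : DFun p q) (S : Finset (Idx p)) : Prop where
  smooth : ∀ n, FinitelySmooth (F n)
  dependsOn : ∀ n, DependsOn (F n) ((n + ·) '' (S : Set (Idx p)))

theorem IsDiffFun.hasStencil_s7 {F : DFun p q} {S : Finset (Idx p)} (h : IsDiffFun F S) :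
    HasStencil_s7 F S := by
  obtain ⟨G, hG, hF⟩ := h
  refine ⟨fun n E _ _ _ u φ => ?_, fun n u v huv => ?_⟩
  · simp only [hF]
    refine (hG n).comp (contDiff_pi.2 fun J => contDiff_pi.2 fun α => contDiff_const.add ?_)
    exact (LinearMap.proj α ∘ₗ LinearMap.proj (n + J.1) ∘ₗ φ).toContinuousLinearMap.contDiff
  · rw [hF, hF]
    congr 1
    funext J
    exact huv _ ⟨J, J.2, rfl⟩

namespace HasStencil_s7

variable {F : DFun p q} {S : Finset (Idx p)}

theorem dirDeriv_eq_zero (hF : HasStencil_s7 F S) {m n : Idx p} (hm : m ∉ (n + ·) '' (S : Set (Idx p)))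
    (α : Fin q) : ∂[m,α] (F n) = 0 :=
  dirDeriv_eq_zero_of_dependsOn (hF.dependsOn n) fun _ hi =>
    Pi.single_eq_of_ne (ne_of_mem_of_not_mem hi hm) _

theorem support_dirDeriv_subset (hF : HasStencil_s7 F S) (n : Idx p) (α : Fin q) :
    Function.support (fun k => ∂[n,α] (F k)) ⊆ (n - ·) '' (S : Set (Idx p)) := by
  intro k hk
  by_contra hn
  refine hk (hF.dirDeriv_eq_zero ?_ α)
  rintro ⟨J, hJ, rfl⟩
  exact hn ⟨J, hJ, add_sub_cancel_right k J⟩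

end HasStencil_s7

theorem EL_eq_sum_dirDeriv (S : Finset (Idx p)) (F : DFun p q) (α : Fin q) (n : Idx p) :
    EL S F α n = ∑ J ∈ S, ∂[n,α] (F (n - J)) := by
  funext u
  simp only [EL, pd_eq_dirDeriv, sub_add_cancel, Finset.sum_apply]

theorem prv_eq_sum_dirDeriv (Q : Fin q → DFun p q) (S : Finset (Idx p)) (F : DFun p q)
    (n : Idx p) : prv Q S F n = ∑ β, ∑ J ∈ S, Q β (n + J) * ∂[n + J,β] (F n) := by
  funext u
  simp only [prv, pd_eq_dirDeriv, Finset.sum_apply, Pi.mul_apply]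

theorem hasStencil_EL {F : DFun p q} {S : Finset (Idx p)} (hF : HasStencil_s7 F S) (α : Fin q) :
    HasStencil_s7 (EL S F α) (S.biUnion fun J => S.image fun K => K - J) where
  smooth n := by
    rw [EL_eq_sum_dirDeriv]
    exact .sum fun J _ => (hF.smooth _).dirDeriv _
  dependsOn n := by
    simp only [EL_eq_sum_dirDeriv, Finset.sum_fn]
    refine dependsOn_sum fun J hJ => (dependsOn_dirDeriv (hF.dependsOn (n - J)) _).mono ?_
    rintro _ ⟨K, hK, rfl⟩
    exact ⟨K - J, Finset.mem_biUnion.2 ⟨J, hJ, Finset.mem_image_of_mem _ hK⟩,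
      (by abel : n + (K - J) = n - J + K)⟩

theorem hasStencil_prv {Q : Fin q → DFun p q} {F : DFun p q} {SQ S : Finset (Idx p)}
    (hQ : ∀ β, HasStencil_s7 (Q β) SQ) (hF : HasStencil_s7 F S) :
    HasStencil_s7 (prv Q S F) (S ∪ (S + SQ)) where
  smooth n := by
    rw [prv_eq_sum_dirDeriv]
    exact .sum fun β _ => .sum fun J _ => ((hQ β).smooth _).mul ((hF.smooth n).dirDeriv _)
  dependsOn n := by
    simp only [prv_eq_sum_dirDeriv, Finset.sum_fn]
    refine dependsOn_sum fun β _ => dependsOn_sum fun J hJ => fun u v huv => ?_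
    have hQuv : Q β (n + J) u = Q β (n + J) v := (hQ β).dependsOn _ fun m hm => by
      obtain ⟨K, hK, rfl⟩ := hm
      exact huv _ ⟨J + K, Finset.mem_union_right _ (Finset.add_mem_add hJ hK),
        (add_assoc n J K).symm⟩
    have hFuv : ∂[n + J,β] (F n) u = ∂[n + J,β] (F n) v :=
      dependsOn_dirDeriv (hF.dependsOn n) _ fun m hm =>
        huv m (Set.image_mono (Finset.coe_subset.2 Finset.subset_union_left) hm)
    simp only [Pi.mul_apply, hQuv, hFuv]

theorem eventually_EL_eq {F : DFun p q} {S : Finset (Idx p)} (hF : HasStencil_s7 F S) (α : Fin q)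
    (n : Idx p) :
    ∀ᶠ A : Finset (Idx p) in atTop, EL S F α n = ∂[n,α] (∑ k ∈ A, F k) := by
  filter_upwards [eventually_sum_eq_sum_comp (M := Fld p q → ℝ) S
    (sub_right_injective (b := n))] with A hA
  rw [dirDeriv_sum fun k _ => hF.smooth k, hA _ (hF.support_dirDeriv_subset n α),
    EL_eq_sum_dirDeriv]

theorem eventually_EL_eq_shift {F : DFun p q} {S : Finset (Idx p)} (hF : HasStencil_s7 F S)
    (α : Fin q) (n c : Idx p) :
    ∀ᶠ A : Finset (Idx p) in atTop, EL S F α n = ∂[n,α] (∑ k ∈ A, F (k + c)) := by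
  have image_tendsto : Tendsto (Finset.image (· + c)) (atTop : Filter (Finset (Idx p))) atTop :=
    tendsto_finset_image_atTop_atTop (sub_add_cancel · c)
  filter_upwards [image_tendsto.eventually (eventually_EL_eq hF α n)] with A hA
  rwa [Finset.sum_image fun _ _ _ _ h => add_right_cancel h] at hA

theorem DDiv_apply_eq_sum (R : Fin p → DFun p q) (n : Idx p) :
    DDiv R n = ∑ i, (R i (n + Pi.single i 1) - R i n) := by
  funext u
  simp only [DDiv, Finset.sum_apply, Pi.sub_apply]

theorem EL_DDiv_eq_zero {R : Fin p → DFun p q} {SR : Fin p → Finset (Idx p)}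
    (hR : ∀ i, HasStencil_s7 (R i) (SR i)) {S : Finset (Idx p)} (hdiv : HasStencil_s7 (DDiv R) S)
    (α : Fin q) (n : Idx p) : EL S (DDiv R) α n = 0 := by
  obtain ⟨A, hA, hAR, hAshift⟩ := ((eventually_EL_eq hdiv α n).and <|
    (eventually_all.2 fun i => eventually_EL_eq (hR i) α n).and <|
    eventually_all.2 fun i => eventually_EL_eq_shift (hR i) α n (Pi.single i 1)).exists
  have smooth (i : Fin p) : FinitelySmooth (∑ k ∈ A, R i k) := .sum fun k _ => (hR i).smooth k
  have smooth_shift (i : Fin p) : FinitelySmooth (∑ k ∈ A, R i (k + Pi.single i 1)) :=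
    .sum fun k _ => (hR i).smooth _
  calc EL S (DDiv R) α n
      = ∂[n,α] (∑ i, (∑ k ∈ A, R i (k + Pi.single i 1) - ∑ k ∈ A, R i k)) := by
        rw [hA]
        simp only [DDiv_apply_eq_sum, ← Finset.sum_sub_distrib]
        rw [Finset.sum_comm]
    _ = ∑ i, (EL (SR i) (R i) α n - EL (SR i) (R i) α n) := by
        rw [dirDeriv_sum fun i _ => (smooth_shift i).sub (smooth i)]
        refine Finset.sum_congr rfl fun i _ => ?_
        rw [dirDeriv_sub (smooth_shift i) (smooth i), ← hAR, ← hAshift]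
    _ = 0 := by simp only [sub_self, Finset.sum_const_zero]

/-- The part over the finite set `M` of lattice points of the infinite sum
`∑ β, ∑ m, Q^β(m) ∂/∂u^β(m)`, which is the prolonged vector field acting on functions of fields. -/
noncomputable def truncatedField (Q : Fin q → DFun p q) (M : Finset (Idx p)) (f : Fld p q → ℝ) :
    Fld p q → ℝ :=
  ∑ β, ∑ m ∈ M, Q β m * ∂[m,β] f

theorem eventually_prv_eq (Q : Fin q → DFun p q) {F : DFun p q} {S : Finset (Idx p)}
    (hF : HasStencil_s7 F S) (n : Idx p) :
    ∀ᶠ M : Finset (Idx p) in atTop, prv Q S F n = truncatedField Q M (F n) := by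
  filter_upwards [eventually_sum_eq_sum_comp (M := Fld p q → ℝ) S (add_right_injective n)] with M hM
  rw [prv_eq_sum_dirDeriv]
  refine Finset.sum_congr rfl fun β _ => (hM (fun m => Q β m * ∂[m,β] (F n)) fun m hm => ?_).symm
  by_contra hmS
  exact hm (by simp only [hF.dirDeriv_eq_zero hmS β, mul_zero])

theorem truncatedField_sum (Q : Fin q → DFun p q) (M : Finset (Idx p)) {ι : Type*}
    {A : Finset ι} {f : ι → Fld p q → ℝ} (hf : ∀ k ∈ A, FinitelySmooth (f k)) :
    truncatedField Q M (∑ k ∈ A, f k) = ∑ k ∈ A, truncatedField Q M (f k) := by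
  simp only [truncatedField, dirDeriv_sum hf, Finset.mul_sum]
  rw [Finset.sum_comm (s := A)]
  exact Finset.sum_congr rfl fun β _ => Finset.sum_comm

theorem dirDeriv_truncatedField {Q : Fin q → DFun p q} (hQ : ∀ β m, FinitelySmooth (Q β m))
    (M : Finset (Idx p)) {f : Fld p q → ℝ} (hf : FinitelySmooth f) (v : Fld p q) :
    dirDeriv v (truncatedField Q M f) =
      truncatedField Q M (dirDeriv v f) + ∑ β, ∑ m ∈ M, dirDeriv v (Q β m) * ∂[m,β] f := by
  have smooth (β : Fin q) (m : Idx p) : FinitelySmooth (Q β m * ∂[m,β] f) :=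
    (hQ β m).mul (hf.dirDeriv _)
  simp only [truncatedField, ← Finset.sum_add_distrib]
  rw [dirDeriv_sum fun β _ => .sum fun m _ => smooth β m]
  refine Finset.sum_congr rfl fun β _ => ?_
  rw [dirDeriv_sum fun m _ => smooth β m]
  refine Finset.sum_congr rfl fun m _ => ?_
  rw [dirDeriv_mul (hQ β m) (hf.dirDeriv _), dirDeriv_comm hf, add_comm]

theorem prv_EL {L : DFun p q} {S SQ T S' : Finset (Idx p)} {Q : Fin q → DFun p q}
    (hL : HasStencil_s7 L S) (hQ : ∀ β, HasStencil_s7 (Q β) SQ) (α : Fin q)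
    (hEL : HasStencil_s7 (EL S L α) T) (hprv : HasStencil_s7 (prv Q S L) S') (n : Idx p) :
    prv Q T (EL S L α) n = EL S' (prv Q S L) α n -
      ∑ β, ∑ J ∈ SQ, ∂[n,α] (Q β (n - J)) * EL S L β (n - J) := by
  obtain ⟨A, hAL, hALQ, hAprv⟩ := ((eventually_EL_eq hL α n).and <|
    (eventually_all.2 fun β => (eventually_all_finset SQ).2 fun J _ =>
      eventually_EL_eq hL β (n - J)).and (eventually_EL_eq hprv α n)).exists
  obtain ⟨M, hMEL, hML, hMQ⟩ := ((eventually_prv_eq Q hEL n).and <|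
    ((eventually_all_finset A).2 fun k _ => eventually_prv_eq Q hL k).and
      (eventually_sum_eq_sum_comp (M := Fld p q → ℝ) SQ (sub_right_injective (b := n)))).exists
  set Λ : Fld p q → ℝ := ∑ k ∈ A, L k with hΛ
  have smooth_action : FinitelySmooth Λ := .sum fun k _ => hL.smooth k
  have action_prv : truncatedField Q M Λ = ∑ k ∈ A, prv Q S L k := by
    rw [hΛ, truncatedField_sum Q M fun k _ => hL.smooth k]
    exact Finset.sum_congr rfl fun k hk => (hML k hk).symm
  have sum_dirDeriv_Q (β : Fin q) : ∑ m ∈ M, ∂[n,α] (Q β m) * ∂[m,β] Λ =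
      ∑ J ∈ SQ, ∂[n,α] (Q β (n - J)) * EL S L β (n - J) := by
    rw [hMQ (fun m => ∂[n,α] (Q β m) * ∂[m,β] Λ) <|
      (Function.support_mul_subset_left _ _).trans ((hQ β).support_dirDeriv_subset n α)]
    exact Finset.sum_congr rfl fun J hJ => by rw [hALQ β J hJ]
  rw [hMEL, hAL, hAprv, ← action_prv,
    dirDeriv_truncatedField (fun β => (hQ β).smooth) M smooth_action]
  simp only [sum_dirDeriv_Q, add_sub_cancel_right]

theorem stmt_7_general (L : DFun p q) (S : Finset (Idx p)) (hL : IsDiffFun L S)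
    (Q : Fin q → DFun p q) (SQ : Finset (Idx p)) (hQ : ∀ α, IsDiffFun (Q α) SQ)
    (R : Fin p → DFun p q) (SR : Fin p → Finset (Idx p))
    (hR : ∀ i, IsDiffFun (R i) (SR i))
    (hsym : ∀ (n : Idx p) (u : Fld p q), prv Q S L n u = DDiv R n u)
    (α : Fin q) (n : Idx p) (u : Fld p q) (hu : ∀ (β : Fin q) (m : Idx p), EL S L β m u = 0) :
    prv Q (S.biUnion fun J => S.image fun K => K - J) (EL S L α) n u = 0 := by
  have prv_eq_DDiv : prv Q S L = DDiv R := funext₂ hsym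
  have hprv := hasStencil_prv (fun β => (hQ β).hasStencil_s7) hL.hasStencil_s7
  have EL_prv : EL (S ∪ (S + SQ)) (prv Q S L) α n = 0 := by
    rw [prv_eq_DDiv] at hprv ⊢
    exact EL_DDiv_eq_zero (fun i => (hR i).hasStencil_s7) hprv α n
  rw [prv_EL hL.hasStencil_s7 (fun β => (hQ β).hasStencil_s7) α (hasStencil_EL hL.hasStencil_s7 α) hprv,
    EL_prv]
  simp [hu]

end DifferenceFunctions

/-- Divergence variational symmetries are symmetries of the
Euler–Lagrange system: let `L` be a difference Lagrangian and `Q` a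
characteristic with `pr v(L) = Div R` identically for some `p`-tuple `R` of
difference functions.  Then for every `α`, every `n`, and every field `u`
solving the Euler–Lagrange system `E_β(L) = 0`, one has
`(pr v(E_α(L)))(n,u) = 0`. -/
theorem stmt_7 {p q : ℕ} (hp : 1 ≤ p) (hq : 1 ≤ q)
    (L : DFun p q) (S : Finset (Idx p)) (hL : IsDiffFun L S)
    (hS : ∀ K ∈ S, (0 : Idx p) ≤ K)
    (Q : Fin q → DFun p q) (SQ : Finset (Idx p)) (hQ : ∀ α, IsDiffFun (Q α) SQ)
    (R : Fin p → DFun p q) (SR : Fin p → Finset (Idx p))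
    (hR : ∀ i, IsDiffFun (R i) (SR i))
    (hsym : ∀ (n : Idx p) (u : Fld p q), prv Q S L n u = DDiv R n u) :
    ∀ (α : Fin q) (n : Idx p) (u : Fld p q),
      (∀ (β : Fin q) (m : Idx p), EL S L β m u = 0) →
      prv Q (S.biUnion fun J => S.image fun K => K - J) (EL S L α) n u = 0 :=
  stmt_7_general L S hL Q SQ hQ R SR hR hsym
end

section
/- For a Lie point characteristic Q, the prolonged vector field commutes with each operator T^i: for every difference Lagrangian L (depending only on forward values u(n+J), J ≥ 0 componentwise), every i ∈ {1,…,p}, and all n ∈ ℤ^p and fields u : ℤ^p → ℝ^q, (pr v(T^i(L)))(n,u) = (T^i(pr v(L)))(n,u); equivalently, [pr v, T^i] = 0 on difference Lagrangians. -/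
open scoped Classical

/-!
Write `X` for the vector field `u ↦ (x ↦ Q(x, u))` on the space of fields, so that `pr v` is the
directional derivative along `X`. Likewise `(T^i F)(n, ·)` is a finite sum of directional
derivatives of the functions `F(m, ·)` along the one-site parts of `X`. For a point characteristic
the component of `X` at a site `x` and the remaining components are each constant along the other,
so the corresponding derivatives commute by the symmetry of second derivatives. Hence the derivative
along `X` commutes with the derivative along each one-site part, and with `T^i`.
-/

section NormedSpace

variable {E F : Type*} [NormedAddCommGroup E] [NormedSpace ℝ E]
  [NormedAddCommGroup F] [NormedSpace ℝ F]

theorem lineDeriv_lineDeriv_comm_of_contDiff {f : E → F} (hf : ContDiff ℝ 2 f) (a v w : E) :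
    lineDeriv ℝ (fun b => lineDeriv ℝ f b w) a v =
      lineDeriv ℝ (fun b => lineDeriv ℝ f b v) a w := by
  have hdf : Differentiable ℝ f := hf.differentiable two_ne_zero
  have hddf : DifferentiableAt ℝ (fderiv ℝ f) a :=
    (hf.fderiv_right (m := 1) one_add_one_eq_two.le).differentiable one_ne_zero a
  have lineDeriv_lineDeriv (v w : E) :
      lineDeriv ℝ (fun b => lineDeriv ℝ f b w) a v = fderiv ℝ (fderiv ℝ f) a v w := by
    simp only [(hdf _).lineDeriv_eq_fderiv]
    rw [(hddf.clm_apply (differentiableAt_const w)).lineDeriv_eq_fderiv,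
      fderiv_clm_apply hddf (differentiableAt_const w)]
    simp
  rw [lineDeriv_lineDeriv, lineDeriv_lineDeriv]
  exact hf.contDiffAt.isSymmSndFDerivAt (by simp) v w

end NormedSpace

section Module

variable {E M F : Type*} [AddCommGroup E] [Module ℝ E] [AddCommGroup M] [Module ℝ M]
  [NormedAddCommGroup F] [NormedSpace ℝ F]

theorem lineDeriv_comp_const_add_linearMap (f : M → F) (u : M) (T : E →ₗ[ℝ] M) (a e : E) :
    lineDeriv ℝ (fun b => f (u + T b)) a e = lineDeriv ℝ f (u + T a) (T e) := by
  simp only [lineDeriv, map_add, map_smul, add_assoc]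

/-- The derivative of the function `f` along the vector field `X`. -/
noncomputable def derivAlong (X : M → M) (f : M → F) : M → F :=
  fun u => lineDeriv ℝ f u (X u)

end Module

section Sites

variable {ι V : Type*} [AddCommGroup V]

theorem lineDeriv_congr_of_dependsOn {F : Type*} [Module ℝ V] [NormedAddCommGroup F]
    [NormedSpace ℝ F] {f : (ι → V) → F} {s : Set ι} (hf : DependsOn f s) {v w : ι → V}
    (hvw : ∀ x ∈ s, v x = w x) (u : ι → V) : lineDeriv ℝ f u v = lineDeriv ℝ f u w := by
  have hline (t : ℝ) : f (u + t • v) = f (u + t • w) :=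
    hf fun x hx => by simp only [Pi.add_apply, Pi.smul_apply, hvw x hx]
  simp only [lineDeriv, hline]

variable [DecidableEq ι]

/-- The part of the vector field `X` that moves only the value of the field at the site `x`. -/
def sitePart (X : (ι → V) → ι → V) (x : ι) : (ι → V) → ι → V :=
  fun u => Pi.single x (X u x)

/-- The part of the vector field `X` that fixes the value of the field at the site `x`. -/
def offSitePart (X : (ι → V) → ι → V) (x : ι) : (ι → V) → ι → V :=
  fun u => Function.update (X u) x 0

theorem sitePart_add_offSitePart (X : (ι → V) → ι → V) (x : ι) :
    sitePart X x + offSitePart X x = X := by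
  funext u y
  obtain rfl | hyx := eq_or_ne y x
  · simp [sitePart, offSitePart]
  · simp [sitePart, offSitePart, hyx]

variable [Module ℝ V] {X : (ι → V) → ι → V}

theorem sitePart_add_smul_offSitePart {x : ι} (hX : DependsOn (fun u => X u x) {x})
    (u : ι → V) (t : ℝ) : sitePart X x (u + t • offSitePart X x u) = sitePart X x u :=
  congrArg (Pi.single x) <| hX fun y hy => by
    rw [Set.mem_singleton_iff.1 hy]
    simp [offSitePart]

theorem offSitePart_add_smul_sitePart {x : ι}
    (hX : ∀ y, y ≠ x → DependsOn (fun u => X u y) {x}ᶜ) (u : ι → V) (t : ℝ) :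
    offSitePart X x (u + t • sitePart X x u) = offSitePart X x u := by
  funext y
  obtain rfl | hyx := eq_or_ne y x
  · simp only [offSitePart, Function.update_self]
  · simp only [offSitePart, Function.update_of_ne hyx]
    exact hX y hyx fun z (hzx : z ≠ x) => by simp [sitePart, hzx]

end Sites

section Fields

variable {ι V F : Type*} [NormedAddCommGroup V] [NormedSpace ℝ V]
  [NormedAddCommGroup F] [NormedSpace ℝ F]

/-- Smoothness of a function on the space of fields `ι → V`, which carries no norm when `ι` is
infinite: as in diffeology, it is tested on the families of fields, parametrized by a normed space,
whose value at each site is smooth. -/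
def FieldSmooth (f : (ι → V) → F) : Prop :=
  ∀ (E : Type) [NormedAddCommGroup E] [NormedSpace ℝ E] (g : E → ι → V),
    (∀ x, ContDiff ℝ (⊤ : ℕ∞) fun e => g e x) → ContDiff ℝ (⊤ : ℕ∞) fun e => f (g e)

namespace FieldSmooth

variable {f g : (ι → V) → F}

theorem sum {κ : Type*} {A : Finset κ} {f : κ → (ι → V) → F}
    (hf : ∀ a ∈ A, FieldSmooth (f a)) : FieldSmooth fun u => ∑ a ∈ A, f a u :=
  fun E _ _ c hc => ContDiff.sum fun a ha => hf a ha E c hc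

theorem contDiff_comp_const_add_linearMap (hf : FieldSmooth f) {E : Type}
    [NormedAddCommGroup E] [NormedSpace ℝ E] [FiniteDimensional ℝ E] (u : ι → V)
    (T : E →ₗ[ℝ] ι → V) : ContDiff ℝ (⊤ : ℕ∞) fun e => f (u + T e) :=
  hf E _ fun x => contDiff_const.add
    (LinearMap.toContinuousLinearMap ((LinearMap.proj x).comp T)).contDiff

theorem lineDifferentiableAt (hf : FieldSmooth f) (u v : ι → V) :
    LineDifferentiableAt ℝ f u v :=
  (hf.contDiff_comp_const_add_linearMap u (LinearMap.toSpanSingleton ℝ _ v)).differentiable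
    (by simp) 0

theorem lineDeriv_add (hf : FieldSmooth f) (u v w : ι → V) :
    lineDeriv ℝ f u (v + w) = lineDeriv ℝ f u v + lineDeriv ℝ f u w := by
  let T : ℝ × ℝ →ₗ[ℝ] ι → V :=
    (LinearMap.toSpanSingleton ℝ _ v).coprod (LinearMap.toSpanSingleton ℝ _ w)
  have hφ : DifferentiableAt ℝ (fun z => f (u + T z)) 0 :=
    (hf.contDiff_comp_const_add_linearMap u T).differentiable (by simp) 0
  have lineDeriv_T (e : ℝ × ℝ) :
      lineDeriv ℝ f u (T e) = fderiv ℝ (fun z => f (u + T z)) 0 e := by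
    rw [← hφ.lineDeriv_eq_fderiv, lineDeriv_comp_const_add_linearMap, map_zero, add_zero]
  have hadd := map_add (fderiv ℝ (fun z => f (u + T z)) 0) (1, 0) (0, 1)
  rw [← lineDeriv_T, ← lineDeriv_T, ← lineDeriv_T] at hadd
  simpa [T] using hadd

theorem isLinearMap_lineDeriv (hf : FieldSmooth f) (u : ι → V) :
    IsLinearMap ℝ (lineDeriv ℝ f u) :=
  ⟨hf.lineDeriv_add u, fun _ _ => lineDeriv_smul⟩

theorem lineDeriv_sum (hf : FieldSmooth f) (u : ι → V) {κ : Type*} (A : Finset κ)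
    (v : κ → ι → V) : lineDeriv ℝ f u (∑ a ∈ A, v a) = ∑ a ∈ A, lineDeriv ℝ f u (v a) :=
  map_sum (hf.isLinearMap_lineDeriv u).mk' v A

theorem lineDeriv_lineDeriv_comm (hf : FieldSmooth f) (u v w : ι → V) :
    lineDeriv ℝ (fun u => lineDeriv ℝ f u w) u v =
      lineDeriv ℝ (fun u => lineDeriv ℝ f u v) u w := by
  let T : ℝ × ℝ →ₗ[ℝ] ι → V :=
    (LinearMap.toSpanSingleton ℝ _ v).coprod (LinearMap.toSpanSingleton ℝ _ w)
  have hφ : ContDiff ℝ 2 fun z => f (u + T z) :=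
    (hf.contDiff_comp_const_add_linearMap u T).of_le (WithTop.coe_le_coe.2 le_top)
  have lineDeriv_lineDeriv_T (d e : ℝ × ℝ) :
      lineDeriv ℝ (fun a => lineDeriv ℝ (fun z => f (u + T z)) a e) 0 d =
        lineDeriv ℝ (fun u => lineDeriv ℝ f u (T e)) u (T d) := by
    simp only [lineDeriv_comp_const_add_linearMap]
    rw [lineDeriv_comp_const_add_linearMap (fun u => lineDeriv ℝ f u (T e)), map_zero, add_zero]
  have hcomm := lineDeriv_lineDeriv_comm_of_contDiff hφ 0 (1, 0) (0, 1)
  rw [lineDeriv_lineDeriv_T, lineDeriv_lineDeriv_T] at hcomm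
  simpa [T] using hcomm

protected theorem derivAlong (hf : FieldSmooth f) {X : (ι → V) → ι → V}
    (hX : ∀ x, FieldSmooth fun u => X u x) : FieldSmooth (derivAlong X f) := by
  intro E _ _ c hc
  have hline : ContDiff ℝ (⊤ : ℕ∞) fun z : E × ℝ => f (c z.1 + z.2 • X (c z.1)) :=
    hf (E × ℝ) _ fun x => ((hc x).comp contDiff_fst).add
      (contDiff_snd.smul ((hX x E c hc).comp contDiff_fst))
  simp only [derivAlong, lineDeriv, ← fderiv_apply_one_eq_deriv]
  exact ContDiff.fderiv_apply (f := fun e t => f (c e + t • X (c e))) hline contDiff_const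
    contDiff_const (by simp)

theorem derivAlong_add_left (hf : FieldSmooth f) (X Y : (ι → V) → ι → V) :
    derivAlong (X + Y) f = derivAlong X f + derivAlong Y f :=
  funext fun u => hf.lineDeriv_add u (X u) (Y u)

theorem derivAlong_add_right (hf : FieldSmooth f) (hg : FieldSmooth g) (X : (ι → V) → ι → V) :
    derivAlong X (f + g) = derivAlong X f + derivAlong X g :=
  funext fun u => deriv_fun_add (hf.lineDifferentiableAt u (X u)) (hg.lineDifferentiableAt u (X u))

theorem derivAlong_sum_right {κ : Type*} {A : Finset κ} {f : κ → (ι → V) → F}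
    (hf : ∀ a ∈ A, FieldSmooth (f a)) (X : (ι → V) → ι → V) (u : ι → V) :
    derivAlong X (fun u => ∑ a ∈ A, f a u) u = ∑ a ∈ A, derivAlong X (f a) u :=
  deriv_fun_sum fun a ha => (hf a ha).lineDifferentiableAt u (X u)

theorem derivAlong_comm_of_const_along (hf : FieldSmooth f) {X Y : (ι → V) → ι → V}
    (hXY : ∀ u (t : ℝ), X (u + t • Y u) = X u) (hYX : ∀ u (t : ℝ), Y (u + t • X u) = Y u) :
    derivAlong X (derivAlong Y f) = derivAlong Y (derivAlong X f) := by
  have derivAlong_derivAlong {X Y : (ι → V) → ι → V}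
      (hYX : ∀ u (t : ℝ), Y (u + t • X u) = Y u) (u : ι → V) :
      derivAlong X (derivAlong Y f) u =
        lineDeriv ℝ (fun u' => lineDeriv ℝ f u' (Y u)) u (X u) := by
    simp only [derivAlong, lineDeriv, hYX]
  funext u
  rw [derivAlong_derivAlong hYX, derivAlong_derivAlong hXY, hf.lineDeriv_lineDeriv_comm]

end FieldSmooth

variable [DecidableEq ι] {X : (ι → V) → ι → V}

protected theorem FieldSmooth.sitePart {x : ι} (hX : FieldSmooth fun u => X u x) (y : ι) :
    FieldSmooth fun u => sitePart X x u y := by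
  intro E _ _ c hc
  obtain rfl | hyx := eq_or_ne y x
  · simpa only [sitePart, Pi.single_eq_same] using hX E c hc
  · simpa only [sitePart, Pi.single_eq_of_ne hyx] using contDiff_const

protected theorem FieldSmooth.offSitePart (hX : ∀ x, FieldSmooth fun u => X u x) (x y : ι) :
    FieldSmooth fun u => offSitePart X x u y := by
  intro E _ _ c hc
  obtain rfl | hyx := eq_or_ne y x
  · simpa only [offSitePart, Function.update_self] using contDiff_const
  · simpa only [offSitePart, Function.update_of_ne hyx] using hX y E c hc

theorem derivAlong_sitePart_comm {f : (ι → V) → F} (hf : FieldSmooth f)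
    (hX : ∀ x, FieldSmooth fun u => X u x) (hpt : ∀ x, DependsOn (fun u => X u x) {x}) (x : ι) :
    derivAlong X (derivAlong (sitePart X x) f) = derivAlong (sitePart X x) (derivAlong X f) := by
  have hpt_off (y : ι) (hyx : y ≠ x) : DependsOn (fun u => X u y) {x}ᶜ :=
    (hpt y).mono (Set.singleton_subset_iff.2 hyx)
  set Y := sitePart X x
  set Z := offSitePart X x
  have hXYZ : X = Y + Z := (sitePart_add_offSitePart X x).symm
  have hYf : FieldSmooth (derivAlong Y f) := hf.derivAlong (FieldSmooth.sitePart (hX x))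
  have hZf : FieldSmooth (derivAlong Z f) := hf.derivAlong (FieldSmooth.offSitePart hX x)
  calc derivAlong X (derivAlong Y f)
      = derivAlong Y (derivAlong Y f) + derivAlong Z (derivAlong Y f) := by
        rw [hXYZ, hYf.derivAlong_add_left]
    _ = derivAlong Y (derivAlong Y f) + derivAlong Y (derivAlong Z f) := by
        rw [hf.derivAlong_comm_of_const_along (offSitePart_add_smul_sitePart hpt_off)
          (sitePart_add_smul_offSitePart (hpt x))]
    _ = derivAlong Y (derivAlong X f) := by
        rw [hXYZ, hf.derivAlong_add_left, hYf.derivAlong_add_right hZf]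

end Fields

section DifferenceFunctions

variable {p q : ℕ}

/-- The vector field on the space of fields whose component at the site `x` is `Q(x, u)`; the
prolonged vector field of `Q` is the derivative along it. -/
def charField (Q : Fin q → DFun p q) : Fld p q → Fld p q :=
  fun u x α => Q α x u

namespace IsDiffFun

variable {F : DFun p q} {S : Finset (Idx p)}

theorem fieldSmooth (hF : IsDiffFun F S) (n : Idx p) : FieldSmooth (F n) := by
  obtain ⟨G, hG, hFG⟩ := hF
  intro E _ _ c hc
  simp only [hFG]
  exact (hG n).comp (contDiff_pi.2 fun J => hc (n + J))

theorem dependsOn (hF : IsDiffFun F S) (n : Idx p) : DependsOn (F n) ((n + ·) '' S) := by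
  obtain ⟨G, -, hFG⟩ := hF
  intro u u' h
  rw [hFG, hFG]
  exact congrArg (G n) <| funext fun J => h _ ⟨J, J.2, rfl⟩

end IsDiffFun

theorem upd_eq_add_smul (u : Fld p q) (x : Idx p) (α : Fin q) (t : ℝ) :
    upd u x α t = u + (t - u x α) • (Pi.single x (Pi.single α 1) : Fld p q) := by
  funext y β
  obtain rfl | hyx := eq_or_ne y x
  · obtain rfl | hβα := eq_or_ne β α
    · simp [upd]
    · simp [upd, hβα]
  · simp [upd, hyx]

theorem pd_eq_lineDeriv (F : DFun p q) (J : Idx p) (α : Fin q) (n : Idx p) (u : Fld p q) :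
    pd F J α n u = lineDeriv ℝ (F n) u (Pi.single (n + J) (Pi.single α 1)) := by
  simp only [pd, upd_eq_add_smul]
  rw [deriv_comp_sub_const
    (f := fun t : ℝ => F n (u + t • (Pi.single (n + J) (Pi.single α 1) : Fld p q))),
    sub_self, lineDeriv]

theorem sum_mul_pd_eq_lineDeriv {F : DFun p q} {n : Idx p} (hF : FieldSmooth (F n)) (J : Idx p)
    (c : Fin q → ℝ) (u : Fld p q) :
    ∑ α, c α * pd F J α n u = lineDeriv ℝ (F n) u (Pi.single (n + J) c) := by
  have hc : (Pi.single (n + J) c : Fld p q) =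
      ∑ α, c α • (Pi.single (n + J) (Pi.single α 1) : Fld p q) := by
    simp only [← Pi.single_smul, smul_eq_mul, mul_one]
    exact (congrArg _ (Finset.univ_sum_single c).symm).trans
      (map_sum (AddMonoidHom.single (fun _ => Fin q → ℝ) (n + J)) _ _)
  simp only [hc, hF.lineDeriv_sum, lineDeriv_smul, smul_eq_mul, pd_eq_lineDeriv]

theorem prv_eq_derivAlong (Q : Fin q → DFun p q) {F : DFun p q} {S : Finset (Idx p)}
    (hF : IsDiffFun F S) (n : Idx p) : prv Q S F n = derivAlong (charField Q) (F n) := by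
  funext u
  have hstencil : ∀ x ∈ (n + ·) '' (S : Set (Idx p)),
      (∑ J ∈ S, Pi.single (n + J) (charField Q u (n + J)) : Fld p q) x = charField Q u x := by
    rintro _ ⟨J, hJ, rfl⟩
    rw [Finset.sum_apply, Finset.sum_eq_single_of_mem J hJ, Pi.single_eq_same]
    exact fun K _ hKJ => Pi.single_eq_of_ne (by simpa using hKJ.symm) _
  calc prv Q S F n u
      = ∑ J ∈ S, ∑ α, Q α (n + J) u * pd F J α n u := Finset.sum_comm
    _ = ∑ J ∈ S, lineDeriv ℝ (F n) u (Pi.single (n + J) (charField Q u (n + J))) :=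
        Finset.sum_congr rfl fun J _ => sum_mul_pd_eq_lineDeriv (hF.fieldSmooth n) J _ u
    _ = derivAlong (charField Q) (F n) u := by
        rw [← (hF.fieldSmooth n).lineDeriv_sum,
          lineDeriv_congr_of_dependsOn (hF.dependsOn n) hstencil, derivAlong]

theorem TT_eq_sum_derivAlong_sitePart (Q : Fin q → DFun p q) (S : Finset (Idx p)) (i : Fin p)
    {F : DFun p q} (hF : ∀ m, FieldSmooth (F m)) (n : Idx p) (u : Fld p q) :
    TT Q S i F n u = ∑ J ∈ S.biUnion fun K => Finset.Icc (Pi.single i 1) K, ∑ K ∈ S with J ≤ K,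
      derivAlong (sitePart (charField Q) (n + J - Pi.single i 1))
        (F (n - Pi.single i 1 - (K - J))) u := by
  simp only [TT, hEuler, Finset.mul_sum]
  rw [Finset.sum_comm]
  refine Finset.sum_congr rfl fun J _ => ?_
  rw [Finset.sum_comm]
  refine Finset.sum_congr rfl fun K _ => ?_
  have hsite : n - Pi.single i 1 - (K - J) + K = n + J - Pi.single i 1 := by abel
  rw [sum_mul_pd_eq_lineDeriv (hF _), hsite]
  rfl

theorem stmt_8_general (Q : Fin q → DFun p q)
    (hQ : ∀ α, IsDiffFun (Q α) ({(0 : Idx p)} : Finset (Idx p)))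
    (L : DFun p q) (S : Finset (Idx p)) (hL : IsDiffFun L S)
    (i : Fin p) (ST : Finset (Idx p)) (hST : IsDiffFun (TT Q S i L) ST)
    (n : Idx p) (u : Fld p q) :
    prv Q ST (TT Q S i L) n u = TT Q S i (prv Q S L) n u := by
  let X := charField Q
  have hX (x : Idx p) : FieldSmooth fun u => X u x := fun E _ _ c hc =>
    contDiff_pi.2 fun α => (hQ α).fieldSmooth x E c hc
  have hpt (x : Idx p) : DependsOn (fun u => X u x) {x} := fun u u' h => funext fun α =>
    (hQ α).dependsOn x (by simpa using h)
  have hLs : ∀ m, FieldSmooth (L m) := hL.fieldSmooth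
  have hXL (m : Idx p) : prv Q S L m = derivAlong X (L m) := prv_eq_derivAlong Q hL m
  have hXLs (m : Idx p) : FieldSmooth (prv Q S L m) := hXL m ▸ (hLs m).derivAlong hX
  have hsite (x m : Idx p) : FieldSmooth (derivAlong (sitePart X x) (L m)) :=
    (hLs m).derivAlong (FieldSmooth.sitePart (hX x))
  rw [prv_eq_derivAlong Q hST, funext (TT_eq_sum_derivAlong_sitePart Q S i hLs n),
    FieldSmooth.derivAlong_sum_right fun J _ => FieldSmooth.sum fun K _ => hsite _ _,
    TT_eq_sum_derivAlong_sitePart Q S i hXLs]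
  refine Finset.sum_congr rfl fun J _ => ?_
  rw [FieldSmooth.derivAlong_sum_right fun K _ => hsite _ _]
  refine Finset.sum_congr rfl fun K _ => ?_
  rw [hXL, derivAlong_sitePart_comm (hLs _) hX hpt]

end DifferenceFunctions

/-- For a Lie point characteristic `Q` (each `Q^α(n,u)` depends
only on `n` and `u(n)`, i.e. has stencil `{0}`), the prolonged vector field
commutes with each operator `T^i`: for every difference Lagrangian `L` and all
`i`, `n`, `u`, `(pr v(T^i(L)))(n,u) = (T^i(pr v(L)))(n,u)`.
(`ST` is any stencil of the difference function `T^i(L)`; the value of `pr v`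
does not depend on the choice of a valid stencil.) -/
theorem stmt_8 {p q : ℕ} (hp : 1 ≤ p) (hq : 1 ≤ q)
    (Q : Fin q → DFun p q)
    (hQ : ∀ α, IsDiffFun (Q α) ({(0 : Idx p)} : Finset (Idx p)))
    (L : DFun p q) (S : Finset (Idx p)) (hL : IsDiffFun L S)
    (hS : ∀ K ∈ S, (0 : Idx p) ≤ K)
    (i : Fin p) (ST : Finset (Idx p)) (hST : IsDiffFun (TT Q S i L) ST)
    (n : Idx p) (u : Fld p q) :
    prv Q ST (TT Q S i L) n u = TT Q S i (prv Q S L) n u := by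
  exact stmt_8_general Q hQ L S hL i ST hST n u
end
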